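/- For every positive integer m, there is no group automorphism ρ of H_m = U/K_m such that ρ(ā) = ā^{-1}, ρ(b̄) = ā^2 b̄, and ρ(c̄) = c̄, where ā, b̄, c̄ denote the images of a, b, c in H_m; in particular, the image in H_1 of the element a^{-2} c^2 (a^2 b)^2 (a^{-1} c)^2 of U has order 2. (This expresses the chirality of the polytope Q_m whose rotation group is H_m.) -/

import Mathlib

/-- The defining relators of the group `U` on generators `a, b, c` (indexed `0, 1, 2`):
`a^4, b^4, c^4, (ab)^2, (bc)^2, (abc)^2, (a^2b^2)^4, a^2c^2b^2(ac)^2, [a,c⁻¹]b^2`,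
where `[x,y] = x⁻¹y⁻¹xy`. -/
def Urels : Set (FreeGroup (Fin 3)) :=
  {(FreeGroup.of 0) ^ 4, (FreeGroup.of 1) ^ 4, (FreeGroup.of 2) ^ 4,
   (FreeGroup.of 0 * FreeGroup.of 1) ^ 2,
   (FreeGroup.of 1 * FreeGroup.of 2) ^ 2,
   (FreeGroup.of 0 * FreeGroup.of 1 * FreeGroup.of 2) ^ 2,
   ((FreeGroup.of 0) ^ 2 * (FreeGroup.of 1) ^ 2) ^ 4,
   (FreeGroup.of 0) ^ 2 * (FreeGroup.of 2) ^ 2 * (FreeGroup.of 1) ^ 2 *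
     (FreeGroup.of 0 * FreeGroup.of 2) ^ 2,
   (FreeGroup.of 0)⁻¹ * FreeGroup.of 2 * FreeGroup.of 0 * (FreeGroup.of 2)⁻¹ *
     (FreeGroup.of 1) ^ 2}

/-- The finitely presented group `U`. -/
abbrev UGroup : Type := PresentedGroup Urels

/-- The generator `a` of `U`. -/
def Ua : UGroup := PresentedGroup.of 0

/-- The generator `b` of `U`. -/
def Ub : UGroup := PresentedGroup.of 1

/-- The generator `c` of `U`. -/
def Uc : UGroup := PresentedGroup.of 2

/-- The element `z = (bc⁻¹)^4` of `U`. -/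
def Uz : UGroup := (Ub * Uc⁻¹) ^ 4

/-- The element `w = (c⁻¹b)^4` of `U`. -/
def Uw : UGroup := (Uc⁻¹ * Ub) ^ 4

/-- The subgroup `K_m = ⟨z^m, w^m⟩` of `U`. -/
def UK (m : ℕ) : Subgroup UGroup := Subgroup.closure {Uz ^ m, Uw ^ m}


theorem wctx {M : Type*} [Monoid M] {l r : M} (P S : M) (h : l = r) : P * l * S = P * r * S := by
  rw [h]

set_option maxHeartbeats 2000000 in
theorem xsq_word {M : Type*} [Monoid M] (a b c A B C : M)
    (r0 : a*A = 1)
    (r1 : A*a = 1)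
    (r2 : b*B = 1)
    (r3 : B*b = 1)
    (r4 : c*C = 1)
    (r5 : C*c = 1)
    (r6 : a*a*a*a = 1)
    (r7 : b*b*b*b = 1)
    (r8 : c*c*c*c = 1)
    (r9 : a*b*a*b = 1)
    (r10 : b*c*b*c = 1)
    (r11 : a*b*c*a*b*c = 1)
    (r12 : a*a*b*b*a*a*b*b*a*a*b*b*a*a*b*b = 1)
    (r13 : a*a*c*c*b*b*a*c*a*c = 1)
    (r14 : A*c*a*C*b*b = 1)
    (r15 : b*C*b*C*b*C*b*C = 1)
    (r16 : C*b*C*b*C*b*C*b = 1)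
    : A*A*c*c*a*a*b*a*a*b*A*c*A*c*A*A*c*c*a*a*b*a*a*b*A*c*A*c = 1 := by
  have h11 : a*a*a = A := calc
    a*a*a
    _ = a*a*a*a*A := by simpa [mul_assoc] using wctx (a*a*a) (1) r0.symm
    _ = A := by simpa [mul_assoc] using wctx (1) (A) r6
  have h12 : b*b*b = B := calc
    b*b*b
    _ = b*b*b*b*B := by simpa [mul_assoc] using wctx (b*b*b) (1) r2.symm
    _ = B := by simpa [mul_assoc] using wctx (1) (B) r7
  have h13 : c*c*c = C := calc
    c*c*c
    _ = c*c*c*c*C := by simpa [mul_assoc] using wctx (c*c*c) (1) r4.symm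
    _ = C := by simpa [mul_assoc] using wctx (1) (C) r8
  have h14 : b*a*b = A := calc
    b*a*b
    _ = A*a*b*a*b := by simpa [mul_assoc] using wctx (1) (b*a*b) r1.symm
    _ = A := by simpa [mul_assoc] using wctx (A) (1) r9
  have h16 : c*b*c = B := calc
    c*b*c
    _ = B*b*c*b*c := by simpa [mul_assoc] using wctx (1) (c*b*c) r3.symm
    _ = B := by simpa [mul_assoc] using wctx (B) (1) r10
  have h18 : a*a = A*A := calc
    a*a
    _ = a*a*a*A := by simpa [mul_assoc] using wctx (a*a) (1) r0.symm
    _ = A*A := by simpa [mul_assoc] using wctx (1) (A) h11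
  have h19 : b*b = B*B := calc
    b*b
    _ = b*b*b*B := by simpa [mul_assoc] using wctx (b*b) (1) r2.symm
    _ = B*B := by simpa [mul_assoc] using wctx (1) (B) h12
  have h20 : c*c = C*C := calc
    c*c
    _ = c*c*c*C := by simpa [mul_assoc] using wctx (c*c) (1) r4.symm
    _ = C*C := by simpa [mul_assoc] using wctx (1) (C) h13
  have h21 : b*a = A*B := calc
    b*a
    _ = b*a*b*B := by simpa [mul_assoc] using wctx (b*a) (1) r2.symm
    _ = A*B := by simpa [mul_assoc] using wctx (1) (B) h14
  have h22 : a*b = B*A := calc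
    a*b
    _ = B*b*a*b := by simpa [mul_assoc] using wctx (1) (a*b) r3.symm
    _ = B*A := by simpa [mul_assoc] using wctx (B) (1) h14
  have h23 : c*b = B*C := calc
    c*b
    _ = c*b*c*C := by simpa [mul_assoc] using wctx (c*b) (1) r4.symm
    _ = B*C := by simpa [mul_assoc] using wctx (1) (C) h16
  have h24 : b*c = C*B := calc
    b*c
    _ = C*c*b*c := by simpa [mul_assoc] using wctx (1) (b*c) r5.symm
    _ = C*B := by simpa [mul_assoc] using wctx (C) (1) h16
  have h25 : A*A*A = a := calc
    A*A*A
    _ = a*a*A := by simpa [mul_assoc] using wctx (1) (A) h18.symm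
    _ = a := by simpa [mul_assoc] using wctx (a) (1) r0
  have h26 : B*B*B = b := calc
    B*B*B
    _ = b*b*B := by simpa [mul_assoc] using wctx (1) (B) h19.symm
    _ = b := by simpa [mul_assoc] using wctx (b) (1) r2
  have h27 : C*C*C = c := calc
    C*C*C
    _ = c*c*C := by simpa [mul_assoc] using wctx (1) (C) h20.symm
    _ = c := by simpa [mul_assoc] using wctx (c) (1) r4
  have h28 : A*B*A = b := calc
    A*B*A
    _ = b*a*A := by simpa [mul_assoc] using wctx (1) (A) h21.symm
    _ = b := by simpa [mul_assoc] using wctx (b) (1) r0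
  have h29 : B*A*B = a := calc
    B*A*B
    _ = B*b*a := by simpa [mul_assoc] using wctx (B) (1) h21.symm
    _ = a := by simpa [mul_assoc] using wctx (1) (a) r3
  have h31 : C*B*C = b := calc
    C*B*C
    _ = C*c*b := by simpa [mul_assoc] using wctx (C) (1) h23.symm
    _ = b := by simpa [mul_assoc] using wctx (1) (b) r5
  have h32 : B*A*c*B*A*c = 1 := calc
    B*A*c*B*A*c
    _ = B*A*c*a*b*c := by simpa [mul_assoc] using wctx (B*A*c) (c) h22.symm
    _ = a*b*c*a*b*c := by simpa [mul_assoc] using wctx (1) (c*a*b*c) h22.symm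
    _ = 1 := by simpa [mul_assoc] using wctx (1) (1) r11
  have h33 : A*c*a*C*B*B = 1 := calc
    A*c*a*C*B*B
    _ = A*c*a*C*b*b := by simpa [mul_assoc] using wctx (A*c*a*C) (1) h19.symm
    _ = 1 := by simpa [mul_assoc] using wctx (1) (1) r14
  have h34 : b*A*A = A*B*a := calc
    b*A*A
    _ = b*a*a := by simpa [mul_assoc] using wctx (b) (1) h18.symm
    _ = A*B*a := by simpa [mul_assoc] using wctx (1) (a) h21
  have h36 : a*B*A = A*A*b := calc
    a*B*A
    _ = a*a*b := by simpa [mul_assoc] using wctx (a) (1) h22.symm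
    _ = A*A*b := by simpa [mul_assoc] using wctx (1) (b) h18
  have h39 : c*B*C = C*C*b := calc
    c*B*C
    _ = c*c*b := by simpa [mul_assoc] using wctx (c) (1) h23.symm
    _ = C*C*b := by simpa [mul_assoc] using wctx (1) (b) h20
  have h40 : c*A*B = B*C*a := calc
    c*A*B
    _ = c*b*a := by simpa [mul_assoc] using wctx (c) (1) h21.symm
    _ = B*C*a := by simpa [mul_assoc] using wctx (1) (a) h23
  have h41 : b*C*B = B*B*c := calc
    b*C*B
    _ = b*b*c := by simpa [mul_assoc] using wctx (b) (1) h24.symm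
    _ = B*B*c := by simpa [mul_assoc] using wctx (1) (c) h19
  have h42 : b*C*C = C*B*c := calc
    b*C*C
    _ = b*c*c := by simpa [mul_assoc] using wctx (b) (1) h20.symm
    _ = C*B*c := by simpa [mul_assoc] using wctx (1) (c) h24
  have h44 : A*c*B*A*c = b := calc
    A*c*B*A*c
    _ = b*B*A*c*B*A*c := by simpa [mul_assoc] using wctx (1) (A*c*B*A*c) r2.symm
    _ = b := by simpa [mul_assoc] using wctx (b) (1) h32
  have h45 : B*A*c*B*A = C := calc
    B*A*c*B*A
    _ = B*A*c*B*A*c*C := by simpa [mul_assoc] using wctx (B*A*c*B*A) (1) r4.symm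
    _ = C := by simpa [mul_assoc] using wctx (1) (C) h32
  have h46 : C*B*B*A*c = A := calc
    C*B*B*A*c
    _ = b*c*B*A*c := by simpa [mul_assoc] using wctx (1) (B*A*c) h24.symm
    _ = A*B*A*c*B*A*c := by simpa [mul_assoc] using wctx (1) (c*B*A*c) h28.symm
    _ = A := by simpa [mul_assoc] using wctx (A) (1) h32
  have h48 : A*c*a*C*b = B := calc
    A*c*a*C*b
    _ = A*c*a*C*B*B*B := by simpa [mul_assoc] using wctx (A*c*a*C) (1) h26.symm
    _ = B := by simpa [mul_assoc] using wctx (1) (B) h33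
  have h49 : c*B*A*c = B*A := calc
    c*B*A*c
    _ = a*A*c*B*A*c := by simpa [mul_assoc] using wctx (1) (c*B*A*c) r0.symm
    _ = a*b := by simpa [mul_assoc] using wctx (a) (1) h44
    _ = B*A := by simpa [mul_assoc] using wctx (1) (1) h22
  have h50 : A*c*B*A = b*C := calc
    A*c*B*A
    _ = A*c*B*A*c*C := by simpa [mul_assoc] using wctx (A*c*B*A) (1) r4.symm
    _ = b*C := by simpa [mul_assoc] using wctx (1) (C) h44
  have h51 : B*A*c*B = C*a := calc
    B*A*c*B
    _ = B*A*c*B*A*a := by simpa [mul_assoc] using wctx (B*A*c*B) (1) r1.symm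
    _ = C*a := by simpa [mul_assoc] using wctx (1) (a) h45
  have h52 : C*B*B*A = A*C := calc
    C*B*B*A
    _ = b*c*B*A := by simpa [mul_assoc] using wctx (1) (B*A) h24.symm
    _ = A*B*A*c*B*A := by simpa [mul_assoc] using wctx (1) (c*B*A) h28.symm
    _ = A*C := by simpa [mul_assoc] using wctx (A) (1) h45
  have h54 : B*B*A*c = c*A := calc
    B*B*A*c
    _ = c*C*B*B*A*c := by simpa [mul_assoc] using wctx (1) (B*B*A*c) r4.symm
    _ = c*A := by simpa [mul_assoc] using wctx (c) (1) h46
  have h55 : c*a*C*b = a*B := calc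
    c*a*C*b
    _ = a*A*c*a*C*b := by simpa [mul_assoc] using wctx (1) (c*a*C*b) r0.symm
    _ = a*B := by simpa [mul_assoc] using wctx (a) (1) h48
  have h57 : c*B*A = B*A*C := calc
    c*B*A
    _ = c*B*A*c*C := by simpa [mul_assoc] using wctx (c*B*A) (1) r4.symm
    _ = B*A*C := by simpa [mul_assoc] using wctx (1) (C) h49
  have h58 : C*B*A = B*A*c := calc
    C*B*A
    _ = C*c*B*A*c := by simpa [mul_assoc] using wctx (C) (1) h49.symm
    _ = B*A*c := by simpa [mul_assoc] using wctx (1) (B*A*c) r5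
  have h60 : B*B*c = A*c*a := calc
    B*B*c
    _ = b*C*B := by simpa [mul_assoc] using wctx (1) (1) h41.symm
    _ = A*c*B*A*B := by simpa [mul_assoc] using wctx (1) (B) h50.symm
    _ = A*c*a := by simpa [mul_assoc] using wctx (A*c) (1) h29
  have h61 : C*B*B = A*C*a := calc
    C*B*B
    _ = b*c*B := by simpa [mul_assoc] using wctx (1) (B) h24.symm
    _ = A*B*A*c*B := by simpa [mul_assoc] using wctx (1) (c*B) h28.symm
    _ = A*C*a := by simpa [mul_assoc] using wctx (A) (1) h51
  have h62 : c*A*C = B*B*A := calc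
    c*A*C
    _ = c*C*B*B*A := by simpa [mul_assoc] using wctx (c) (1) h52.symm
    _ = B*B*A := by simpa [mul_assoc] using wctx (1) (B*B*A) r4
  have h63 : C*B*a = A*C*B := calc
    C*B*a
    _ = C*B*B*A*B := by simpa [mul_assoc] using wctx (C*B) (1) h29.symm
    _ = A*C*B := by simpa [mul_assoc] using wctx (1) (B) h52
  have h64 : b*A*c = B*c*A := calc
    b*A*c
    _ = B*B*B*A*c := by simpa [mul_assoc] using wctx (1) (A*c) h26.symm
    _ = B*c*A := by simpa [mul_assoc] using wctx (B) (1) h54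
  have h66 : a*C*b = C*a*B := calc
    a*C*b
    _ = C*c*a*C*b := by simpa [mul_assoc] using wctx (1) (a*C*b) r5.symm
    _ = C*a*B := by simpa [mul_assoc] using wctx (C) (1) h55
  have h68 : B*A*C*B = c*a := calc
    B*A*C*B
    _ = c*B*A*B := by simpa [mul_assoc] using wctx (1) (B) h57.symm
    _ = c*a := by simpa [mul_assoc] using wctx (c) (1) h29
  have h69 : A*C*a*B = C*b := calc
    A*C*a*B
    _ = C*B*B*B := by simpa [mul_assoc] using wctx (1) (B) h61.symm
    _ = C*b := by simpa [mul_assoc] using wctx (C) (1) h26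
  have h76 : B*A*C*C*b = C*a*C := calc
    B*A*C*C*b
    _ = B*A*c*B*C := by simpa [mul_assoc] using wctx (B*A) (1) h39.symm
    _ = C*a*C := by simpa [mul_assoc] using wctx (1) (C) h51
  have h78 : A*c*A*A*b = b*A*C := calc
    A*c*A*A*b
    _ = A*c*a*B*A := by simpa [mul_assoc] using wctx (A*c) (1) h36.symm
    _ = B*B*c*B*A := by simpa [mul_assoc] using wctx (1) (B*A) h60.symm
    _ = b*C*B*B*A := by simpa [mul_assoc] using wctx (1) (B*A) h41.symm
    _ = b*A*C := by simpa [mul_assoc] using wctx (b) (1) h52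
  have h82 : c*A*b = B*a*C := calc
    c*A*b
    _ = B*B*A*c*b := by simpa [mul_assoc] using wctx (1) (b) h54.symm
    _ = B*B*A*B*C := by simpa [mul_assoc] using wctx (B*B*A) (1) h23
    _ = B*a*C := by simpa [mul_assoc] using wctx (B) (C) h29
  have h84 : B*A*C*A*A = c*B*a := calc
    B*A*C*A*A
    _ = c*B*A*A*A := by simpa [mul_assoc] using wctx (1) (A*A) h57.symm
    _ = c*B*a := by simpa [mul_assoc] using wctx (c*B) (1) h25
  have h85 : B*A*C*C*B = C*C*a := calc
    B*A*C*C*B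
    _ = B*A*c*c*B := by simpa [mul_assoc] using wctx (B*A) (B) h20.symm
    _ = C*B*A*c*B := by simpa [mul_assoc] using wctx (1) (c*B) h58.symm
    _ = C*C*a := by simpa [mul_assoc] using wctx (C) (1) h51
  have h91 : b*A*C*B = A*c*A*A := calc
    b*A*C*B
    _ = b*C*B*a := by simpa [mul_assoc] using wctx (b) (1) h63.symm
    _ = B*B*c*a := by simpa [mul_assoc] using wctx (1) (a) h41
    _ = A*c*a*a := by simpa [mul_assoc] using wctx (1) (a) h60
    _ = A*c*A*A := by simpa [mul_assoc] using wctx (A*c) (1) h18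
  have h94 : c*B*c*A = B*C*A*c := calc
    c*B*c*A
    _ = c*b*A*c := by simpa [mul_assoc] using wctx (c) (1) h64.symm
    _ = B*C*A*c := by simpa [mul_assoc] using wctx (1) (A*c) h23
  have h96 : a*C*a*B = A*A*C*b := calc
    a*C*a*B
    _ = a*a*C*b := by simpa [mul_assoc] using wctx (a) (1) h66.symm
    _ = A*A*C*b := by simpa [mul_assoc] using wctx (1) (C*b) h18
  have h97 : a*C*A*B = C*a*B*a := calc
    a*C*A*B
    _ = a*C*b*a := by simpa [mul_assoc] using wctx (a*C) (1) h21.symm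
    _ = C*a*B*a := by simpa [mul_assoc] using wctx (1) (a) h66
  have h100 : B*A*A*C*B = c*A*A := calc
    B*A*A*C*B
    _ = B*A*C*B*a := by simpa [mul_assoc] using wctx (B*A) (1) h63.symm
    _ = c*a*a := by simpa [mul_assoc] using wctx (1) (a) h68
    _ = c*A*A := by simpa [mul_assoc] using wctx (c) (1) h18
  have h101 : A*C*A*A*b = C*b*A := calc
    A*C*A*A*b
    _ = A*C*a*B*A := by simpa [mul_assoc] using wctx (A*C) (1) h36.symm
    _ = C*b*A := by simpa [mul_assoc] using wctx (1) (A) h69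
  have h102 : C*b*C*b*C*b*C = B := calc
    C*b*C*b*C*b*C
    _ = B*b*C*b*C*b*C*b*C := by simpa [mul_assoc] using wctx (1) (C*b*C*b*C*b*C) r3.symm
    _ = B := by simpa [mul_assoc] using wctx (B) (1) r15
  have h106 : c*A*A*b = B*A*A*C := calc
    c*A*A*b
    _ = a*A*c*A*A*b := by simpa [mul_assoc] using wctx (1) (c*A*A*b) r0.symm
    _ = a*b*A*C := by simpa [mul_assoc] using wctx (a) (1) h78
    _ = B*A*A*C := by simpa [mul_assoc] using wctx (1) (A*C) h22
  have h110 : C*B*c*B = A*C*C*a := calc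
    C*B*c*B
    _ = b*C*C*B := by simpa [mul_assoc] using wctx (1) (B) h42.symm
    _ = A*B*A*C*C*B := by simpa [mul_assoc] using wctx (1) (C*C*B) h28.symm
    _ = A*C*C*a := by simpa [mul_assoc] using wctx (A) (1) h85
  have h112 : c*A*A*C = B*A*A*b := calc
    c*A*A*C
    _ = B*A*A*C*B*C := by simpa [mul_assoc] using wctx (1) (C) h100.symm
    _ = B*A*A*b := by simpa [mul_assoc] using wctx (B*A*A) (1) h31
  have h113 : b*C*b*C*b*C = c*B := calc
    b*C*b*C*b*C
    _ = c*C*b*C*b*C*b*C := by simpa [mul_assoc] using wctx (1) (b*C*b*C*b*C) r4.symm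
    _ = c*B := by simpa [mul_assoc] using wctx (c) (1) h102
  have h116 : C*b*C*b*C = B*c*B := calc
    C*b*C*b*C
    _ = B*b*C*b*C*b*C := by simpa [mul_assoc] using wctx (1) (C*b*C*b*C) r3.symm
    _ = B*c*B := by simpa [mul_assoc] using wctx (B) (1) h113
  have h118 : c*B*c*B = b*C*b*C := calc
    c*B*c*B
    _ = c*C*b*C*b*C := by simpa [mul_assoc] using wctx (c) (1) h116.symm
    _ = b*C*b*C := by simpa [mul_assoc] using wctx (1) (b*C*b*C) r4
  have h119 : C*b*C*b = B*c*B*c := calc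
    C*b*C*b
    _ = C*b*C*b*C*c := by simpa [mul_assoc] using wctx (C*b*C*b) (1) r5.symm
    _ = B*c*B*c := by simpa [mul_assoc] using wctx (1) (c) h116
  have h120 : A*A*C*A*C*A*A*c*a*c = 1 := calc
    A*A*C*A*C*A*A*c*a*c
    _ = A*A*C*A*C*a*a*c*a*c := by simpa [mul_assoc] using wctx (A*A*C*A*C) (c*a*c) h18.symm
    _ = A*A*C*C*B*B*a*c*a*c := by simpa [mul_assoc] using wctx (A*A*C) (a*c*a*c) h61.symm
    _ = A*A*C*C*b*b*a*c*a*c := by simpa [mul_assoc] using wctx (A*A*C*C) (a*c*a*c) h19.symm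
    _ = A*A*c*c*b*b*a*c*a*c := by simpa [mul_assoc] using wctx (A*A) (b*b*a*c*a*c) h20.symm
    _ = a*a*c*c*b*b*a*c*a*c := by simpa [mul_assoc] using wctx (1) (c*c*b*b*a*c*a*c) h18.symm
    _ = 1 := by simpa [mul_assoc] using wctx (1) (1) r13
  have h124 : C*A*A*C*B = B*A*C*C*A := calc
    C*A*A*C*B
    _ = C*A*A*b*c := by simpa [mul_assoc] using wctx (C*A*A) (1) h24.symm
    _ = C*a*B*A*c := by simpa [mul_assoc] using wctx (C) (c) h36.symm
    _ = B*A*c*B*B*A*c := by simpa [mul_assoc] using wctx (1) (B*A*c) h51.symm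
    _ = B*A*c*c*A := by simpa [mul_assoc] using wctx (B*A*c) (1) h54
    _ = B*A*C*C*A := by simpa [mul_assoc] using wctx (B*A) (A) h20
  have h127 : b*C*A*C*a = A*C*C*a*B := calc
    b*C*A*C*a
    _ = b*C*C*B*B := by simpa [mul_assoc] using wctx (b*C) (1) h61.symm
    _ = C*B*c*B*B := by simpa [mul_assoc] using wctx (1) (B*B) h42
    _ = A*C*C*a*B := by simpa [mul_assoc] using wctx (1) (B) h110
  have h132 : B*A*C*C*A*B = C*a*C*a := calc
    B*A*C*C*A*B
    _ = B*A*C*C*b*a := by simpa [mul_assoc] using wctx (B*A*C*C) (1) h21.symm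
    _ = C*a*C*a := by simpa [mul_assoc] using wctx (1) (a) h76
  have h144 : C*C*A*A*b = B*A*C*A*C := calc
    C*C*A*A*b
    _ = c*c*A*A*b := by simpa [mul_assoc] using wctx (1) (A*A*b) h20.symm
    _ = c*B*A*A*C := by simpa [mul_assoc] using wctx (c) (1) h106
    _ = B*A*C*A*C := by simpa [mul_assoc] using wctx (1) (A*C) h57
  have h167 : A*C*A*C*A*A*c*a*c = a := calc
    A*C*A*C*A*A*c*a*c
    _ = a*A*A*C*A*C*A*A*c*a*c := by simpa [mul_assoc] using wctx (1) (A*C*A*C*A*A*c*a*c) r0.symm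
    _ = a := by simpa [mul_assoc] using wctx (a) (1) h120
  have h168 : A*A*C*A*C*A*A*c*a = C := calc
    A*A*C*A*C*A*A*c*a
    _ = A*A*C*A*C*A*A*c*a*c*C := by simpa [mul_assoc] using wctx (A*A*C*A*C*A*A*c*a) (1) r4.symm
    _ = C := by simpa [mul_assoc] using wctx (1) (C) h120
  have h177 : C*A*C*A*A*c*a*c = A*A := calc
    C*A*C*A*A*c*a*c
    _ = a*A*C*A*C*A*A*c*a*c := by simpa [mul_assoc] using wctx (1) (C*A*C*A*A*c*a*c) r0.symm
    _ = a*a := by simpa [mul_assoc] using wctx (a) (1) h167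
    _ = A*A := by simpa [mul_assoc] using wctx (1) (1) h18
  have h178 : A*C*A*C*A*A*c*a = a*C := calc
    A*C*A*C*A*A*c*a
    _ = A*C*A*C*A*A*c*a*c*C := by simpa [mul_assoc] using wctx (A*C*A*C*A*A*c*a) (1) r4.symm
    _ = a*C := by simpa [mul_assoc] using wctx (1) (C) h167
  have h179 : A*A*C*A*C*A*A*c = C*A := calc
    A*A*C*A*C*A*A*c
    _ = A*A*C*A*C*A*A*c*a*A := by simpa [mul_assoc] using wctx (A*A*C*A*C*A*A*c) (1) r0.symm
    _ = C*A := by simpa [mul_assoc] using wctx (1) (A) h168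
  have h184 : C*A*C*A*A*c*a = A*A*C := calc
    C*A*C*A*A*c*a
    _ = C*A*C*A*A*c*a*c*C := by simpa [mul_assoc] using wctx (C*A*C*A*A*c*a) (1) r4.symm
    _ = A*A*C := by simpa [mul_assoc] using wctx (1) (C) h177
  have h186 : A*C*A*C*A*A*c = a*C*A := calc
    A*C*A*C*A*A*c
    _ = A*C*A*C*A*A*c*a*A := by simpa [mul_assoc] using wctx (A*C*A*C*A*A*c) (1) r0.symm
    _ = a*C*A := by simpa [mul_assoc] using wctx (1) (A) h178
  have h187 : A*A*C*A*C*A*A = C*A*C := calc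
    A*A*C*A*C*A*A
    _ = A*A*C*A*C*A*A*c*C := by simpa [mul_assoc] using wctx (A*A*C*A*C*A*A) (1) r4.symm
    _ = C*A*C := by simpa [mul_assoc] using wctx (1) (C) h179
  have h190 : C*A*C*A*A*c = A*A*C*A := calc
    C*A*C*A*A*c
    _ = C*A*C*A*A*c*a*A := by simpa [mul_assoc] using wctx (C*A*C*A*A*c) (1) r0.symm
    _ = A*A*C*A := by simpa [mul_assoc] using wctx (1) (A) h184
  have h191 : A*C*A*A*c*a = B*A*A*b := calc
    A*C*A*A*c*a
    _ = c*C*A*C*A*A*c*a := by simpa [mul_assoc] using wctx (1) (A*C*A*A*c*a) r4.symm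
    _ = c*A*A*C := by simpa [mul_assoc] using wctx (c) (1) h184
    _ = B*A*A*b := by simpa [mul_assoc] using wctx (1) (1) h112
  have h194 : A*C*A*C*A*A = a*C*A*C := calc
    A*C*A*C*A*A
    _ = A*C*A*C*A*A*c*C := by simpa [mul_assoc] using wctx (A*C*A*C*A*A) (1) r4.symm
    _ = a*C*A*C := by simpa [mul_assoc] using wctx (1) (C) h186
  have h196 : A*A*C*A*C*a = C*A*C*A := calc
    A*A*C*A*C*a
    _ = A*A*C*A*C*A*A*A := by simpa [mul_assoc] using wctx (A*A*C*A*C) (1) h25.symm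
    _ = C*A*C*A := by simpa [mul_assoc] using wctx (1) (A) h187
  have h201 : B*A*A*b*A = A*C*A*A*c := calc
    B*A*A*b*A
    _ = c*A*A*C*A := by simpa [mul_assoc] using wctx (1) (A) h112.symm
    _ = c*C*A*C*A*A*c := by simpa [mul_assoc] using wctx (c) (1) h190.symm
    _ = A*C*A*A*c := by simpa [mul_assoc] using wctx (1) (A*C*A*A*c) r4
  have h203 : c*B*a*c*a = B*B*A*A*b := calc
    c*B*a*c*a
    _ = B*A*C*A*A*c*a := by simpa [mul_assoc] using wctx (1) (c*a) h84.symm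
    _ = B*B*A*A*b := by simpa [mul_assoc] using wctx (B) (1) h191
  have h208 : a*C*A*C*b = A*C*C*b*A := calc
    a*C*A*C*b
    _ = A*C*A*C*A*A*b := by simpa [mul_assoc] using wctx (1) (b) h194.symm
    _ = A*C*C*b*A := by simpa [mul_assoc] using wctx (A*C) (1) h101
  have h209 : C*A*C*A*B = A*A*C*C*b := calc
    C*A*C*A*B
    _ = A*A*C*A*C*a*B := by simpa [mul_assoc] using wctx (1) (B) h196.symm
    _ = A*A*C*C*b := by simpa [mul_assoc] using wctx (A*A*C) (1) h69
  have h213 : A*A*C*A*A*c = b*A*b*A := calc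
    A*A*C*A*A*c
    _ = A*B*A*A*b*A := by simpa [mul_assoc] using wctx (A) (1) h201.symm
    _ = b*A*b*A := by simpa [mul_assoc] using wctx (1) (A*b*A) h28
  have h216 : B*a*c*a = A*C*A*b := calc
    B*a*c*a
    _ = C*c*B*a*c*a := by simpa [mul_assoc] using wctx (1) (B*a*c*a) r5.symm
    _ = C*B*B*A*A*b := by simpa [mul_assoc] using wctx (C) (1) h203
    _ = A*C*a*A*A*b := by simpa [mul_assoc] using wctx (1) (A*A*b) h61
    _ = A*C*A*b := by simpa [mul_assoc] using wctx (A*C) (A*b) r0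
  have h217 : A*C*A*b*A = B*a*c := calc
    A*C*A*b*A
    _ = B*a*c*a*A := by simpa [mul_assoc] using wctx (1) (A) h216.symm
    _ = B*a*c := by simpa [mul_assoc] using wctx (B*a*c) (1) r0
  have h218 : b*A*C*A*b = a*c*a := calc
    b*A*C*A*b
    _ = b*B*a*c*a := by simpa [mul_assoc] using wctx (b) (1) h216.symm
    _ = a*c*a := by simpa [mul_assoc] using wctx (1) (a*c*a) r2
  have h219 : a*B*a*c = C*A*b*A := calc
    a*B*a*c
    _ = a*A*C*A*b*A := by simpa [mul_assoc] using wctx (a) (1) h217.symm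
    _ = C*A*b*A := by simpa [mul_assoc] using wctx (1) (C*A*b*A) r0
  have h220 : b*A*C*A = a*c*a*B := calc
    b*A*C*A
    _ = b*A*C*A*b*B := by simpa [mul_assoc] using wctx (b*A*C*A) (1) r2.symm
    _ = a*c*a*B := by simpa [mul_assoc] using wctx (1) (B) h218
  have h221 : C*A*b*A*C = a*B*a := calc
    C*A*b*A*C
    _ = a*B*a*c*C := by simpa [mul_assoc] using wctx (1) (C) h219.symm
    _ = a*B*a := by simpa [mul_assoc] using wctx (a*B*a) (1) r4
  have h228 : B*A*A*b*C*b = A*C*A*B := calc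
    B*A*A*b*C*b
    _ = c*A*A*C*C*b := by simpa [mul_assoc] using wctx (1) (C*b) h112.symm
    _ = c*C*A*C*A*B := by simpa [mul_assoc] using wctx (c) (1) h209.symm
    _ = A*C*A*B := by simpa [mul_assoc] using wctx (1) (A*C*A*B) r4
  have h230 : a*C*A*A*c = A*b*A*b*A := calc
    a*C*A*A*c
    _ = A*A*A*C*A*A*c := by simpa [mul_assoc] using wctx (1) (C*A*A*c) h25.symm
    _ = A*b*A*b*A := by simpa [mul_assoc] using wctx (A) (1) h213
  have h245 : A*C*C*A*b*A = C*A*B*c := calc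
    A*C*C*A*b*A
    _ = A*C*a*B*a*c := by simpa [mul_assoc] using wctx (A*C) (1) h219.symm
    _ = C*b*a*c := by simpa [mul_assoc] using wctx (1) (a*c) h69
    _ = C*A*B*c := by simpa [mul_assoc] using wctx (C) (c) h21
  have h249 : A*A*b*A*C*b = b*C*b*A := calc
    A*A*b*A*C*b
    _ = a*B*A*A*C*b := by simpa [mul_assoc] using wctx (1) (A*C*b) h36.symm
    _ = a*c*A*A*b*b := by simpa [mul_assoc] using wctx (a) (b) h106.symm
    _ = a*c*a*B*A*b := by simpa [mul_assoc] using wctx (a*c) (b) h36.symm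
    _ = b*A*C*A*A*b := by simpa [mul_assoc] using wctx (1) (A*b) h220.symm
    _ = b*C*b*A := by simpa [mul_assoc] using wctx (b) (1) h101
  have h250 : C*C*a*B*a = B*a*C*A*C := calc
    C*C*a*B*a
    _ = C*C*C*A*b*A*C := by simpa [mul_assoc] using wctx (C*C) (1) h221.symm
    _ = c*A*b*A*C := by simpa [mul_assoc] using wctx (1) (A*b*A*C) h27
    _ = B*a*C*A*C := by simpa [mul_assoc] using wctx (1) (A*C) h82
  have h252 : C*A*A*c*A*A = a*B*a*B := calc
    C*A*A*c*A*A
    _ = C*A*b*A*C*B := by simpa [mul_assoc] using wctx (C*A) (1) h91.symm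
    _ = a*B*a*B := by simpa [mul_assoc] using wctx (1) (B) h221
  have h261 : b*A*b*C*b = A*A*C*A*B := calc
    b*A*b*C*b
    _ = A*B*A*A*b*C*b := by simpa [mul_assoc] using wctx (1) (A*b*C*b) h28.symm
    _ = A*A*C*A*B := by simpa [mul_assoc] using wctx (A) (1) h228
  have h271 : a*B*a*B*a = C*A*A*c*A := calc
    a*B*a*B*a
    _ = C*A*A*c*A*A*a := by simpa [mul_assoc] using wctx (1) (a) h252.symm
    _ = C*A*A*c*A := by simpa [mul_assoc] using wctx (C*A*A*c*A) (1) r1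
  have h315 : B*B*C*a*c*B = A*A*C*A*B*C := calc
    B*B*C*a*c*B
    _ = B*c*A*B*c*B := by simpa [mul_assoc] using wctx (B) (c*B) h40.symm
    _ = b*A*c*B*c*B := by simpa [mul_assoc] using wctx (1) (B*c*B) h64.symm
    _ = b*A*b*C*b*C := by simpa [mul_assoc] using wctx (b*A) (1) h118
    _ = A*A*C*A*B*C := by simpa [mul_assoc] using wctx (1) (C) h261
  have h411 : C*A*B*B*A*C = A*C*C*A*B*B := calc
    C*A*B*B*A*C
    _ = C*A*B*c*B*A := by simpa [mul_assoc] using wctx (C*A*B) (1) h57.symm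
    _ = A*C*C*A*b*A*B*A := by simpa [mul_assoc] using wctx (1) (B*A) h245.symm
    _ = A*C*C*A*b*b := by simpa [mul_assoc] using wctx (A*C*C*A*b) (1) h28
    _ = A*C*C*A*B*B := by simpa [mul_assoc] using wctx (A*C*C*A) (1) h19
  have h417 : C*A*B*C*a*B = A*B*B*C*A*c := calc
    C*A*B*C*a*B
    _ = C*A*B*a*C*b := by simpa [mul_assoc] using wctx (C*A*B) (1) h66.symm
    _ = C*b*A*A*C*b := by simpa [mul_assoc] using wctx (C) (C*b) h34.symm
    _ = A*C*A*A*b*A*C*b := by simpa [mul_assoc] using wctx (1) (A*C*b) h101.symm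
    _ = A*C*b*C*b*A := by simpa [mul_assoc] using wctx (A*C) (1) h249
    _ = A*B*c*B*c*A := by simpa [mul_assoc] using wctx (A) (A) h119
    _ = A*B*B*C*A*c := by simpa [mul_assoc] using wctx (A*B) (1) h94
  have h476 : A*B*C*a*B*a*C = B*C*a*c*B := calc
    A*B*C*a*B*a*C
    _ = A*B*a*C*A*B*C := by simpa [mul_assoc] using wctx (A*B) (C) h97.symm
    _ = b*A*A*C*A*B*C := by simpa [mul_assoc] using wctx (1) (C*A*B*C) h34.symm
    _ = b*B*B*C*a*c*B := by simpa [mul_assoc] using wctx (b) (1) h315.symm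
    _ = B*C*a*c*B := by simpa [mul_assoc] using wctx (1) (B*C*a*c*B) r2
  exact calc
    A*A*c*c*a*a*b*a*a*b*A*c*A*c*A*A*c*c*a*a*b*a*a*b*A*c*A*c
    _ = A*A*C*C*a*a*b*a*a*b*A*c*A*c*A*A*c*c*a*a*b*a*a*b*A*c*A*c := by simpa [mul_assoc] using wctx (A*A) (a*a*b*a*a*b*A*c*A*c*A*A*c*c*a*a*b*a*a*b*A*c*A*c) h20
    _ = A*A*C*C*A*A*b*a*a*b*A*c*A*c*A*A*c*c*a*a*b*a*a*b*A*c*A*c := by simpa [mul_assoc] using wctx (A*A*C*C) (b*a*a*b*A*c*A*c*A*A*c*c*a*a*b*a*a*b*A*c*A*c) h18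
    _ = A*A*B*A*C*A*C*a*a*b*A*c*A*c*A*A*c*c*a*a*b*a*a*b*A*c*A*c := by simpa [mul_assoc] using wctx (A*A) (a*a*b*A*c*A*c*A*A*c*c*a*a*b*a*a*b*A*c*A*c) h144
    _ = A*b*C*A*C*a*a*b*A*c*A*c*A*A*c*c*a*a*b*a*a*b*A*c*A*c := by simpa [mul_assoc] using wctx (A) (C*A*C*a*a*b*A*c*A*c*A*A*c*c*a*a*b*a*a*b*A*c*A*c) h28
    _ = A*A*C*C*a*B*a*b*A*c*A*c*A*A*c*c*a*a*b*a*a*b*A*c*A*c := by simpa [mul_assoc] using wctx (A) (a*b*A*c*A*c*A*A*c*c*a*a*b*a*a*b*A*c*A*c) h127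
    _ = A*A*B*a*C*A*C*b*A*c*A*c*A*A*c*c*a*a*b*a*a*b*A*c*A*c := by simpa [mul_assoc] using wctx (A*A) (b*A*c*A*c*A*A*c*c*a*a*b*a*a*b*A*c*A*c) h250
    _ = A*A*B*A*C*C*b*A*A*c*A*c*A*A*c*c*a*a*b*a*a*b*A*c*A*c := by simpa [mul_assoc] using wctx (A*A*B) (A*c*A*c*A*A*c*c*a*a*b*a*a*b*A*c*A*c) h208
    _ = A*b*C*C*b*A*A*c*A*c*A*A*c*c*a*a*b*a*a*b*A*c*A*c := by simpa [mul_assoc] using wctx (A) (C*C*b*A*A*c*A*c*A*A*c*c*a*a*b*a*a*b*A*c*A*c) h28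
    _ = A*C*B*c*b*A*A*c*A*c*A*A*c*c*a*a*b*a*a*b*A*c*A*c := by simpa [mul_assoc] using wctx (A) (b*A*A*c*A*c*A*A*c*c*a*a*b*a*a*b*A*c*A*c) h42
    _ = A*C*B*B*C*A*A*c*A*c*A*A*c*c*a*a*b*a*a*b*A*c*A*c := by simpa [mul_assoc] using wctx (A*C*B) (A*A*c*A*c*A*A*c*c*a*a*b*a*a*b*A*c*A*c) h23
    _ = A*A*C*a*C*A*A*c*A*c*A*A*c*c*a*a*b*a*a*b*A*c*A*c := by simpa [mul_assoc] using wctx (A) (C*A*A*c*A*c*A*A*c*c*a*a*b*a*a*b*A*c*A*c) h61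
    _ = A*A*C*A*b*A*b*A*A*c*A*A*c*c*a*a*b*a*a*b*A*c*A*c := by simpa [mul_assoc] using wctx (A*A*C) (A*c*A*A*c*c*a*a*b*a*a*b*A*c*A*c) h230
    _ = A*B*a*c*b*A*A*c*A*A*c*c*a*a*b*a*a*b*A*c*A*c := by simpa [mul_assoc] using wctx (A) (b*A*A*c*A*A*c*c*a*a*b*a*a*b*A*c*A*c) h217
    _ = A*B*a*B*C*A*A*c*A*A*c*c*a*a*b*a*a*b*A*c*A*c := by simpa [mul_assoc] using wctx (A*B*a) (A*A*c*A*A*c*c*a*a*b*a*a*b*A*c*A*c) h23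
    _ = A*B*a*B*a*B*a*B*c*c*a*a*b*a*a*b*A*c*A*c := by simpa [mul_assoc] using wctx (A*B*a*B) (c*c*a*a*b*a*a*b*A*c*A*c) h252
    _ = A*B*C*A*A*c*A*B*c*c*a*a*b*a*a*b*A*c*A*c := by simpa [mul_assoc] using wctx (A*B) (B*c*c*a*a*b*a*a*b*A*c*A*c) h271
    _ = A*B*C*A*A*B*C*a*c*c*a*a*b*a*a*b*A*c*A*c := by simpa [mul_assoc] using wctx (A*B*C*A*A) (c*c*a*a*b*a*a*b*A*c*A*c) h40
    _ = A*B*C*A*A*B*C*a*C*C*a*a*b*a*a*b*A*c*A*c := by simpa [mul_assoc] using wctx (A*B*C*A*A*B*C*a) (a*a*b*a*a*b*A*c*A*c) h20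
    _ = A*B*C*A*A*B*C*a*C*C*A*A*b*a*a*b*A*c*A*c := by simpa [mul_assoc] using wctx (A*B*C*A*A*B*C*a*C*C) (b*a*a*b*A*c*A*c) h18
    _ = A*B*C*A*A*B*C*a*B*A*C*A*C*a*a*b*A*c*A*c := by simpa [mul_assoc] using wctx (A*B*C*A*A*B*C*a) (a*a*b*A*c*A*c) h144
    _ = A*B*C*A*A*B*C*A*A*b*C*A*C*a*a*b*A*c*A*c := by simpa [mul_assoc] using wctx (A*B*C*A*A*B*C) (C*A*C*a*a*b*A*c*A*c) h36
    _ = A*B*C*A*A*B*C*A*A*A*C*C*a*B*a*b*A*c*A*c := by simpa [mul_assoc] using wctx (A*B*C*A*A*B*C*A*A) (a*b*A*c*A*c) h127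
    _ = A*B*C*A*A*B*C*a*C*C*a*B*a*b*A*c*A*c := by simpa [mul_assoc] using wctx (A*B*C*A*A*B*C) (C*C*a*B*a*b*A*c*A*c) h25
    _ = A*B*C*A*A*B*C*a*B*a*C*A*C*b*A*c*A*c := by simpa [mul_assoc] using wctx (A*B*C*A*A*B*C*a) (b*A*c*A*c) h250
    _ = A*B*C*A*B*C*a*c*B*A*C*b*A*c*A*c := by simpa [mul_assoc] using wctx (A*B*C*A) (A*C*b*A*c*A*c) h476
    _ = A*B*C*A*B*C*a*B*A*C*C*b*A*c*A*c := by simpa [mul_assoc] using wctx (A*B*C*A*B*C*a) (C*b*A*c*A*c) h57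
    _ = A*B*A*B*B*C*A*c*A*C*C*b*A*c*A*c := by simpa [mul_assoc] using wctx (A*B) (A*C*C*b*A*c*A*c) h417
    _ = b*B*B*C*A*c*A*C*C*b*A*c*A*c := by simpa [mul_assoc] using wctx (1) (B*B*C*A*c*A*C*C*b*A*c*A*c) h28
    _ = B*C*A*c*A*C*C*b*A*c*A*c := by simpa [mul_assoc] using wctx (1) (B*C*A*c*A*C*C*b*A*c*A*c) r2
    _ = B*C*A*B*B*A*C*b*A*c*A*c := by simpa [mul_assoc] using wctx (B*C*A) (C*b*A*c*A*c) h62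
    _ = B*A*C*C*A*B*B*b*A*c*A*c := by simpa [mul_assoc] using wctx (B) (b*A*c*A*c) h411
    _ = C*a*C*a*B*b*A*c*A*c := by simpa [mul_assoc] using wctx (1) (B*b*A*c*A*c) h132
    _ = C*A*A*C*b*b*A*c*A*c := by simpa [mul_assoc] using wctx (C) (b*A*c*A*c) h96
    _ = C*A*A*C*B*B*A*c*A*c := by simpa [mul_assoc] using wctx (C*A*A*C) (A*c*A*c) h19
    _ = B*A*C*C*A*B*A*c*A*c := by simpa [mul_assoc] using wctx (1) (B*A*c*A*c) h124
    _ = C*a*C*a*A*c*A*c := by simpa [mul_assoc] using wctx (1) (A*c*A*c) h132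
    _ = C*a*C*c*A*c := by simpa [mul_assoc] using wctx (C*a*C) (c*A*c) r0
    _ = C*a*A*c := by simpa [mul_assoc] using wctx (C*a) (A*c) r5
    _ = C*c := by simpa [mul_assoc] using wctx (C) (c) r0
    _ = 1 := by simpa [mul_assoc] using wctx (1) (1) r5

def permA : Equiv.Perm (Fin 32) where
  toFun := ![3, 0, 1, 2, 14, 9, 5, 6, 19, 7, 12, 27, 22, 4, 16, 8, 13, 11, 15, 18, 25, 10, 21, 29, 20, 28, 17, 26, 24, 31, 23, 30]
  invFun := ![1, 2, 3, 0, 13, 6, 7, 9, 15, 5, 21, 17, 10, 16, 4, 18, 14, 26, 19, 8, 24, 22, 12, 30, 28, 20, 27, 11, 25, 23, 31, 29]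
  left_inv := by decide
  right_inv := by decide

def permB : Equiv.Perm (Fin 32) where
  toFun := ![0, 13, 10, 1, 2, 4, 15, 8, 7, 21, 5, 18, 3, 12, 6, 17, 26, 14, 24, 9, 19, 20, 16, 11, 23, 22, 25, 30, 27, 28, 29, 31]
  invFun := ![0, 3, 4, 12, 5, 10, 14, 8, 7, 19, 2, 23, 13, 1, 17, 6, 22, 15, 11, 20, 21, 9, 25, 24, 18, 26, 16, 28, 29, 30, 27, 31]
  left_inv := by decide
  right_inv := by decide

def permC : Equiv.Perm (Fin 32) where
  toFun := ![0, 12, 4, 3, 5, 11, 6, 7, 8, 20, 23, 2, 15, 17, 1, 14, 22, 13, 10, 19, 29, 28, 16, 24, 18, 26, 25, 9, 21, 27, 30, 31]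
  invFun := ![0, 14, 11, 3, 2, 4, 6, 7, 8, 27, 18, 5, 1, 17, 15, 12, 22, 13, 24, 19, 9, 28, 16, 10, 23, 26, 25, 29, 21, 20, 30, 31]
  left_inv := by decide
  right_inv := by decide

def permGen : Fin 3 → Equiv.Perm (Fin 32) := ![permA, permB, permC]

theorem permGen_rel : ∀ r ∈ Urels, FreeGroup.lift permGen r = 1 := by
  intro r hr
  simp only [Urels, Set.mem_insert_iff, Set.mem_singleton_iff] at hr
  rcases hr with rfl | rfl | rfl | rfl | rfl | rfl | rfl | rfl | rfl <;>
    simp only [map_mul, map_pow, map_inv, FreeGroup.lift_apply_of] <;>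
    (apply Equiv.ext; decide)

def permHom : UGroup →* Equiv.Perm (Fin 32) := PresentedGroup.toGroup permGen_rel

theorem permHom_a : permHom Ua = permA := PresentedGroup.toGroup.of permGen_rel
theorem permHom_b : permHom Ub = permB := PresentedGroup.toGroup.of permGen_rel
theorem permHom_c : permHom Uc = permC := PresentedGroup.toGroup.of permGen_rel

theorem permHom_z : permHom Uz = 1 := by
  simp only [Uz, map_mul, map_pow, map_inv, permHom_b, permHom_c]
  apply Equiv.ext; decide

theorem permHom_w : permHom Uw = 1 := by
  simp only [Uw, map_mul, map_pow, map_inv, permHom_b, permHom_c]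
  apply Equiv.ext; decide

theorem UK_le_ker (m : ℕ) : UK m ≤ permHom.ker := by
  rw [UK, Subgroup.closure_le]
  rintro x (rfl | rfl)
  · simp [MonoidHom.mem_ker, permHom_z]
  · simp [MonoidHom.mem_ker, permHom_w]

theorem permHom_x :
    permHom (Ua⁻¹ ^ 2 * Uc ^ 2 * (Ua ^ 2 * Ub) ^ 2 * (Ua⁻¹ * Uc) ^ 2) ≠ 1 := by
  simp only [map_mul, map_pow, map_inv, permHom_a, permHom_b, permHom_c]
  intro h
  have := congrArg (fun f : Equiv.Perm (Fin 32) => f 0) h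
  revert this
  decide

theorem x_notin (m : ℕ) :
    (Ua⁻¹ ^ 2 * Uc ^ 2 * (Ua ^ 2 * Ub) ^ 2 * (Ua⁻¹ * Uc) ^ 2) ∉ UK m :=
  fun h => permHom_x (UK_le_ker m h)


theorem xsq_group {G : Type*} [Group G] (a b c : G)
    (h1 : a ^ 4 = 1) (h2 : b ^ 4 = 1) (h3 : c ^ 4 = 1) (h4 : (a * b) ^ 2 = 1)
    (h5 : (b * c) ^ 2 = 1) (h6 : (a * b * c) ^ 2 = 1) (h7 : (a ^ 2 * b ^ 2) ^ 4 = 1)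
    (h8 : a ^ 2 * c ^ 2 * b ^ 2 * (a * c) ^ 2 = 1) (h9 : a⁻¹ * c * a * c⁻¹ * b ^ 2 = 1)
    (h10 : (b * c⁻¹) ^ 4 = 1) (h11 : (c⁻¹ * b) ^ 4 = 1) :
    (a⁻¹ ^ 2 * c ^ 2 * (a ^ 2 * b) ^ 2 * (a⁻¹ * c) ^ 2) ^ 2 = 1 := by
  have key := xsq_word a b c a⁻¹ b⁻¹ c⁻¹ (mul_inv_cancel a) (inv_mul_cancel a) (mul_inv_cancel b)
    (inv_mul_cancel b) (mul_inv_cancel c) (inv_mul_cancel c)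
    (by simpa only [pow_succ, pow_zero, one_mul, mul_assoc] using h1)
    (by simpa only [pow_succ, pow_zero, one_mul, mul_assoc] using h2)
    (by simpa only [pow_succ, pow_zero, one_mul, mul_assoc] using h3)
    (by simpa only [pow_succ, pow_zero, one_mul, mul_assoc] using h4)
    (by simpa only [pow_succ, pow_zero, one_mul, mul_assoc] using h5)
    (by simpa only [pow_succ, pow_zero, one_mul, mul_assoc] using h6)
    (by simpa only [pow_succ, pow_zero, one_mul, mul_assoc] using h7)
    (by simpa only [pow_succ, pow_zero, one_mul, mul_assoc] using h8)
    (by simpa only [pow_succ, pow_zero, one_mul, mul_assoc] using h9)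
    (by simpa only [pow_succ, pow_zero, one_mul, mul_assoc] using h10)
    (by simpa only [pow_succ, pow_zero, one_mul, mul_assoc] using h11)
  simpa only [pow_succ, pow_zero, one_mul, mul_assoc] using key

theorem x_sq_mem (hnorm1 : (UK 1).Normal) :
    (QuotientGroup.mk (Ua⁻¹ ^ 2 * Uc ^ 2 * (Ua ^ 2 * Ub) ^ 2 * (Ua⁻¹ * Uc) ^ 2) :
        UGroup ⧸ UK 1) ^ 2 = 1 := by
  have q : ∀ r ∈ Urels, QuotientGroup.mk' (UK 1) (PresentedGroup.mk Urels r) = 1 := by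
    intro r hr
    rw [PresentedGroup.one_of_mem hr, map_one]
  have hz : QuotientGroup.mk' (UK 1) Uz = 1 :=
    (QuotientGroup.eq_one_iff _).2 (Subgroup.subset_closure (by simp))
  have hw : QuotientGroup.mk' (UK 1) Uw = 1 :=
    (QuotientGroup.eq_one_iff _).2 (Subgroup.subset_closure (by simp))
  simp only [Uz, Uw, map_mul, map_pow, map_inv] at hz hw
  simp only [Urels, Set.mem_insert_iff, Set.mem_singleton_iff, forall_eq_or_imp, forall_eq,
    map_mul, map_pow, map_inv] at q
  obtain ⟨h1, h2, h3, h4, h5, h6, h7, h8, h9⟩ := q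
  exact xsq_group (QuotientGroup.mk' (UK 1) Ua) (QuotientGroup.mk' (UK 1) Ub)
    (QuotientGroup.mk' (UK 1) Uc) h1 h2 h3 h4 h5 h6 h7 h8 h9 hz hw

/-- For every positive integer `m`, there is no automorphism `ρ` of `H_m = U / K_m` with
`ρ(ā) = ā⁻¹`, `ρ(b̄) = ā² b̄` and `ρ(c̄) = c̄`; in particular, the image in `H_1` of
`a⁻² c² (a² b)² (a⁻¹ c)²` has order `2`. (This expresses the chirality of the polytope
`Q_m` whose rotation group is `H_m`.) -/
theorem Hm_no_mirror_automorphism (m : ℕ) (hm : 0 < m)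
    (hnorm : (UK m).Normal) (hnorm1 : (UK 1).Normal) :
    haveI := hnorm
    haveI := hnorm1
    (¬ ∃ ρ : (UGroup ⧸ UK m) ≃* (UGroup ⧸ UK m),
        ρ (QuotientGroup.mk Ua) = (QuotientGroup.mk Ua : UGroup ⧸ UK m)⁻¹ ∧
        ρ (QuotientGroup.mk Ub) =
          (QuotientGroup.mk Ua : UGroup ⧸ UK m) ^ 2 * QuotientGroup.mk Ub ∧
        ρ (QuotientGroup.mk Uc) = (QuotientGroup.mk Uc : UGroup ⧸ UK m)) ∧
    orderOf (QuotientGroup.mk (Ua⁻¹ ^ 2 * Uc ^ 2 * (Ua ^ 2 * Ub) ^ 2 * (Ua⁻¹ * Uc) ^ 2) :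
        UGroup ⧸ UK 1) = 2 := by
  refine ⟨?_, ?_⟩
  · rintro ⟨ρ, ha, hb, hc⟩
    apply x_notin m
    rw [← QuotientGroup.eq_one_iff]
    have h8 : (QuotientGroup.mk Ua : UGroup ⧸ UK m) ^ 2 * QuotientGroup.mk Uc ^ 2 *
        QuotientGroup.mk Ub ^ 2 * (QuotientGroup.mk Ua * QuotientGroup.mk Uc) ^ 2 = 1 := by
      have h : (Ua ^ 2 * Uc ^ 2 * Ub ^ 2 * (Ua * Uc) ^ 2 : UGroup) = 1 :=
        PresentedGroup.one_of_mem (rels := Urels)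
          (x := (FreeGroup.of 0) ^ 2 * (FreeGroup.of 2) ^ 2 * (FreeGroup.of 1) ^ 2 *
            (FreeGroup.of 0 * FreeGroup.of 2) ^ 2) (by simp [Urels])
      exact congrArg (QuotientGroup.mk' (UK m)) h
    have h8' := congrArg ρ h8
    simp only [map_mul, map_pow, map_one, ha, hb, hc] at h8'
    exact h8'
  · refine orderOf_eq_prime (x_sq_mem hnorm1) ?_
    intro h
    exact x_notin 1 ((QuotientGroup.eq_one_iff _).1 h)
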